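/- For every connected finite simple graph G of order n that is regular of degree Δ ≥ 1 (every vertex has exactly Δ neighbours), Γ(G) ≤ n/2, i.e., 2·Γ(G) ≤ n. -/

import Mathlib

/-!
Let `D` be a minimal dominating set, and let `A` be the set of vertices of `D` with no neighbour
in `D`, and `B = D \ A`. By minimality every `b ∈ B` has a private neighbour outside `D`, that is,
one whose only neighbour in `D` is `b` (`IsMinDomSet.exists_private`). Choosing one for each `b`
gives a set `C` disjoint from `D` with `|C| = |B|`. No vertex of `A` is adjacent to `D` or to `C`,
so all `Δ |A|` edges leaving `A` end in the set `R` of remaining vertices, which can absorb at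
most `Δ |R|` edges. Hence `|A| ≤ |R|`, and `n = |D| + |C| + |R| ≥ |D| + |B| + |A| = 2 |D|`.
-/

/-- `D` is a dominating set of `G`: every vertex is in `D` or has a neighbour in `D`. -/
def IsDomSet {V : Type*} (G : SimpleGraph V) (D : Finset V) : Prop :=
  ∀ v : V, v ∈ D ∨ ∃ u ∈ D, G.Adj u v

/-- `D` is a minimal dominating set of `G`. -/
def IsMinDomSet {V : Type*} (G : SimpleGraph V) (D : Finset V) : Prop :=
  IsDomSet G D ∧ ∀ D' : Finset V, D' ⊂ D → ¬ IsDomSet G D'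

/-- The upper domination number `Γ(G)`: maximum cardinality of a minimal dominating set. -/
noncomputable def upperDomNum {V : Type*} [Fintype V] (G : SimpleGraph V) : ℕ :=
  sSup {n : ℕ | ∃ D : Finset V, IsMinDomSet G D ∧ D.card = n}

/-- In a minimal dominating set, a vertex with a neighbour in the set has an external private
neighbour. -/
theorem IsMinDomSet.exists_private {V : Type*} {G : SimpleGraph V}
    {D : Finset V} (hD : IsMinDomSet G D) {b : V} (hb : b ∈ D) (hB : ∃ u ∈ D, G.Adj u b) :
    ∃ v, v ∉ D ∧ ∀ u ∈ D, G.Adj u v → u = b := by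
  classical
  have h := hD.2 _ (Finset.erase_ssubset hb)
  simp only [IsDomSet, not_forall, not_or, not_exists, not_and, Finset.mem_erase] at h
  obtain ⟨v, hv, hu⟩ := h
  have hvb : v ≠ b := by
    rintro rfl
    obtain ⟨u, huD, huv⟩ := hB
    exact hu u ⟨huv.ne, huD⟩ huv
  exact ⟨v, hv hvb, fun u huD huv => by_contra fun hne => hu u ⟨hne, huD⟩ huv⟩

theorem IsMinDomSet.two_mul_card_le {V : Type*} [Fintype V] {G : SimpleGraph V}
    [DecidableRel G.Adj] {Δ : ℕ} (hΔ : 1 ≤ Δ) (hreg : ∀ v : V, G.degree v = Δ)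
    {D : Finset V} (hD : IsMinDomSet G D) : 2 * D.card ≤ Fintype.card V := by
  classical
  have hp : ∀ b : V, ∃ v, b ∈ D → (∃ u ∈ D, G.Adj u b) →
      v ∉ D ∧ ∀ u ∈ D, G.Adj u v → u = b := by
    intro b
    by_cases h : b ∈ D ∧ ∃ u ∈ D, G.Adj u b
    · obtain ⟨v, hv⟩ := hD.exists_private h.1 h.2
      exact ⟨v, fun _ _ => hv⟩
    · exact ⟨b, fun h1 h2 => absurd ⟨h1, h2⟩ h⟩
  choose p hp using hp
  set B := D.filter (fun b => ∃ u ∈ D, G.Adj u b) with hB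
  set A := D.filter (fun b => ¬ ∃ u ∈ D, G.Adj u b) with hA
  have hAB : B.card + A.card = D.card := Finset.card_filter_add_card_filter_not _
  have hpB : ∀ b ∈ B, p b ∉ D ∧ ∀ u ∈ D, G.Adj u (p b) → u = b := by
    intro b hb
    rw [hB, Finset.mem_filter] at hb
    exact hp b hb.1 hb.2
  have hC : (B.image p).card = B.card := by
    refine Finset.card_image_of_injOn fun b hb c hc hbc => ?_
    obtain ⟨h1, h2⟩ := hpB b hb
    -- domination is what makes `p b` adjacent to some vertex of `D`, hence to `b`
    obtain h | ⟨u, hu, huv⟩ := hD.1 (p b)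
    · exact absurd h h1
    · exact (h2 u hu huv).symm.trans ((hpB c hc).2 u hu (hbc ▸ huv))
  have hdisj : Disjoint D (B.image p) := by
    refine Finset.disjoint_right.2 fun v hv => ?_
    obtain ⟨b, hb, rfl⟩ := Finset.mem_image.1 hv
    exact (hpB b hb).1
  have hR : (D ∪ B.image p)ᶜ.card + (D.card + B.card) = Fintype.card V := by
    rw [← hC, ← Finset.card_union_of_disjoint hdisj]
    exact Finset.card_compl_add_card _
  have hAR : A.card * Δ ≤ (D ∪ B.image p)ᶜ.card * Δ := by
    refine Finset.card_mul_le_card_mul G.Adj (fun a ha => ?_) (fun v _ => ?_)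
    · rw [hA, Finset.mem_filter] at ha
      rw [← hreg a, ← G.card_neighborFinset_eq_degree]
      refine Finset.card_le_card fun v hv => ?_
      rw [SimpleGraph.mem_neighborFinset] at hv
      rw [Finset.mem_bipartiteAbove, Finset.mem_compl, Finset.mem_union, Finset.mem_image]
      refine ⟨?_, hv⟩
      rintro (h | ⟨b, hb, rfl⟩)
      · exact ha.2 ⟨v, h, hv.symm⟩
      · have hab := (hpB b hb).2 a ha.1 hv
        exact ha.2 (hab ▸ (Finset.mem_filter.1 hb).2)
    · rw [← hreg v, ← G.card_neighborFinset_eq_degree]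
      refine Finset.card_le_card fun a ha => ?_
      rw [SimpleGraph.mem_neighborFinset]
      exact ((Finset.mem_bipartiteBelow _).1 ha).2.symm
  have := Nat.le_of_mul_le_mul_right hAR hΔ
  omega

theorem stmt7 {V : Type*} [Fintype V] (G : SimpleGraph V) [DecidableRel G.Adj]
    (hconn : G.Connected) (Δ : ℕ) (hΔ : 1 ≤ Δ)
    (hreg : ∀ v : V, G.degree v = Δ) :
    2 * upperDomNum G ≤ Fintype.card V := by
  have h : upperDomNum G ≤ Fintype.card V / 2 := by
    refine csSup_le' ?_
    rintro _ ⟨D, hD, rfl⟩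
    have := hD.two_mul_card_le hΔ hreg
    omega
  omega
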